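/- Fix $k \in [d]$ and let $S \in \mathbb{R}^{m \times \prod_{i \in [d]\setminus\{k\}} n_i}$ be the TensorSketch matrix generated by CountSketch matrices $S_i \in \mathbb{R}^{m \times n_i}$, $i \in [d]\setminus\{k\}$. Let $S_{<k}$ be the TensorSketch matrix generated by $\{S_i\}_{i<k}$ and $S_{>k}$ the TensorSketch matrix generated by $\{S_i\}_{i>k}$. Then for any matrices $G_{<k} \in \mathbb{R}^{n_1 \cdots n_{k-1} \times r_{k-1}}$ and $G_{>k} \in \mathbb{R}^{r_k \times n_{k+1}\cdots n_d}$, $S\,(G_{>k}^{\top} \otimes G_{<k}) = F^{-1}\,[(F S_{>k} G_{>k}^{\top}) \,\square\, (F S_{<k} G_{<k})]$, where $F \in \mathbb{C}^{m\times m}$ is the discrete Fourier transform matrix. -/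

import Mathlib

open Matrix Complex

noncomputable def dft (m : ℕ) : Matrix (Fin m) (Fin m) ℂ :=
  Matrix.of fun s t : Fin m =>
    Complex.exp (-2 * Real.pi * Complex.I * ((s : ℕ) : ℂ) * ((t : ℕ) : ℂ) / (m : ℂ))

def countSketch {m : ℕ} {ι : Type*} (h : ι → Fin m) (v : ι → ℝ) :
    Matrix (Fin m) ι ℝ :=
  Matrix.of fun j i => if h i = j then v i else 0

def faceSplit {μ n₁ n₂ α : Type*} [Mul α] (D : Matrix μ n₂ α) (C : Matrix μ n₁ α) :
    Matrix μ (n₁ × n₂) α :=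
  Matrix.of fun s i => D s i.2 * C s i.1

def hashPair {m : ℕ} [NeZero m] {ι₁ ι₂ : Type*} (h₁ : ι₁ → Fin m) (h₂ : ι₂ → Fin m) :
    ι₁ × ι₂ → Fin m :=
  fun i => ⟨((h₁ i.1 : ℕ) + (h₂ i.2 : ℕ)) % m, Nat.mod_lt _ (Nat.pos_of_ne_zero (NeZero.ne m))⟩

def hashFam {m : ℕ} [NeZero m] {q : ℕ} {n : Fin q → ℕ} (h : ∀ k, Fin (n k) → Fin m) :
    (∀ k, Fin (n k)) → Fin m :=
  fun i => ⟨(∑ k, (h k (i k) : ℕ)) % m, Nat.mod_lt _ (Nat.pos_of_ne_zero (NeZero.ne m))⟩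

def ttChain (r n : ℕ → ℕ) {α : Type*} [Semiring α]
    (G : (j : ℕ) → Fin (n j) → Matrix (Fin (r j)) (Fin (r (j + 1))) α) :
    (p : ℕ) → ((j : Fin p) → Fin (n j)) → Matrix (Fin (r 0)) (Fin (r p)) α
  | 0, _ => 1
  | p + 1, i => ttChain r n G p (fun j => i j.castSucc) * G p (i (Fin.last p))

theorem dft_apply_pow (m : ℕ) (s t : Fin m) :
    dft m s t = (Complex.exp (2 * Real.pi * Complex.I / (m : ℂ)))⁻¹ ^ ((s : ℕ) * (t : ℕ)) := by
  rw [← Complex.exp_neg, ← Complex.exp_nat_mul]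
  simp only [dft, Matrix.of_apply]
  congr 1
  push_cast
  ring

theorem dft_root (m : ℕ) [NeZero m] :
    IsPrimitiveRoot (Complex.exp (2 * Real.pi * Complex.I / (m : ℂ)))⁻¹ m :=
  (Complex.isPrimitiveRoot_exp m (NeZero.ne m)).inv

theorem dft_isUnit_det (m : ℕ) [NeZero m] : IsUnit (dft m).det := by
  have h : dft m = Matrix.vandermonde
      (fun s : Fin m => (Complex.exp (2 * Real.pi * Complex.I / (m : ℂ)))⁻¹ ^ (s : ℕ)) := by
    ext s t
    rw [dft_apply_pow, Matrix.vandermonde_apply, pow_mul]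
  rw [isUnit_iff_ne_zero, h, Matrix.det_vandermonde_ne_zero_iff]
  intro s t hst
  exact Fin.ext ((dft_root m).pow_inj s.2 t.2 hst)

theorem dft_hashPair {m : ℕ} [NeZero m] {ι₁ ι₂ : Type*} (h₁ : ι₁ → Fin m) (h₂ : ι₂ → Fin m)
    (s : Fin m) (i : ι₁ × ι₂) :
    dft m s (hashPair h₁ h₂ i) = dft m s (h₂ i.2) * dft m s (h₁ i.1) := by
  simp only [dft_apply_pow, hashPair]
  have hr := (dft_root m).pow_eq_one
  generalize (Complex.exp (2 * Real.pi * Complex.I / (m : ℂ)))⁻¹ = z at hr ⊢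
  rw [← pow_add, ← mul_add, mul_comm, pow_mul, mul_comm (s : ℕ), pow_mul]
  congr 1
  rw [add_comm (h₂ i.2 : ℕ)]
  conv_rhs => rw [← Nat.mod_add_div ((h₁ i.1 : ℕ) + (h₂ i.2 : ℕ)) m, pow_add, pow_mul,
    hr, one_pow, mul_one]

theorem dft_mul_countSketch {m : ℕ} {ι : Type*} (h : ι → Fin m) (v : ι → ℝ) (s : Fin m) (i : ι) :
    (dft m * (countSketch h v).map Complex.ofReal) s i = dft m s (h i) * (v i : ℂ) := by
  rw [Matrix.mul_apply, Finset.sum_eq_single (h i)]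
  · simp [countSketch]
  · intro j _ hj
    simp [countSketch, Ne.symm hj]
  · simp

/-- Theorem 3.4: fixing a mode `k`, with `p = k-1` modes below (dimensions
`a j`) and `q = d-k` modes above (dimensions `b j`), let `S` be the TensorSketch matrix
generated by all the CountSketch matrices `S_i`, `i ∈ [d] \ {k}`, `S_{<k}` the TensorSketch
matrix generated by those below and `S_{>k}` the one generated by those above.  Then
`S (G_{>k}ᵀ ⊗ G_{<k}) = F⁻¹ [(F S_{>k} G_{>k}ᵀ) □ (F S_{<k} G_{<k})]`.  (The row of the
Kronecker product at multi-index `(i_{<k}, i_{>k})` is `G_{>k}ᵀ(i_{>k},:) ⊗ G_{<k}(i_{<k},:)`.) -/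
theorem tensorSketch_mul_interfaceKronecker
    {m p q rkm rk : ℕ} [NeZero m] {a : Fin p → ℕ} {b : Fin q → ℕ}
    (hlt : ∀ j, Fin (a j) → Fin m) (vlt : ∀ j, Fin (a j) → ℝ)
    (hgt : ∀ j, Fin (b j) → Fin m) (vgt : ∀ j, Fin (b j) → ℝ)
    (hvlt : ∀ j i, vlt j i = 1 ∨ vlt j i = -1) (hvgt : ∀ j i, vgt j i = 1 ∨ vgt j i = -1)
    (S : Matrix (Fin m) ((∀ j, Fin (a j)) × (∀ j, Fin (b j))) ℝ)
    (hS : S = countSketch (hashPair (hashFam hlt) (hashFam hgt))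
      (fun i => (∏ j, vlt j (i.1 j)) * ∏ j, vgt j (i.2 j)))
    (Slt : Matrix (Fin m) (∀ j, Fin (a j)) ℝ)
    (hSlt : Slt = countSketch (hashFam hlt) (fun i => ∏ j, vlt j (i j)))
    (Sgt : Matrix (Fin m) (∀ j, Fin (b j)) ℝ)
    (hSgt : Sgt = countSketch (hashFam hgt) (fun i => ∏ j, vgt j (i j)))
    (Glt : Matrix (∀ j, Fin (a j)) (Fin rkm) ℝ)
    (Ggt : Matrix (Fin rk) (∀ j, Fin (b j)) ℝ) :
    (S * Matrix.kroneckerMap (· * ·) Glt Ggtᵀ).map Complex.ofReal =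
      (dft m)⁻¹ *
        faceSplit (dft m * Sgt.map Complex.ofReal * (Ggtᵀ).map Complex.ofReal)
                  (dft m * Slt.map Complex.ofReal * Glt.map Complex.ofReal) := by
  subst hS hSlt hSgt
  have key : dft m * (countSketch (hashPair (hashFam hlt) (hashFam hgt))
      (fun i => (∏ j, vlt j (i.1 j)) * ∏ j, vgt j (i.2 j)) *
        Matrix.kroneckerMap (· * ·) Glt Ggtᵀ).map Complex.ofReal =
      faceSplit (dft m * (countSketch (hashFam hgt) (fun i => ∏ j, vgt j (i j))).map
          Complex.ofReal * (Ggtᵀ).map Complex.ofReal)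
        (dft m * (countSketch (hashFam hlt) (fun i => ∏ j, vlt j (i j))).map
          Complex.ofReal * Glt.map Complex.ofReal) := by
    have hmap' : ∀ (A : Matrix (Fin m) ((∀ j, Fin (a j)) × (∀ j, Fin (b j))) ℝ)
        (B : Matrix ((∀ j, Fin (a j)) × (∀ j, Fin (b j))) (Fin rkm × Fin rk) ℝ),
        (A * B).map Complex.ofReal = A.map Complex.ofReal * B.map Complex.ofReal :=
      fun A B => Matrix.map_mul (L := A) (M := B) (f := Complex.ofRealHom)
    rw [hmap', ← Matrix.mul_assoc]
    ext s ⟨x, y⟩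
    simp only [faceSplit, Matrix.of_apply]
    rw [Matrix.mul_apply, Matrix.mul_apply, Matrix.mul_apply, Finset.sum_mul_sum,
      Finset.sum_comm, Fintype.sum_prod_type]
    refine Finset.sum_congr rfl fun i _ => Finset.sum_congr rfl fun j _ => ?_
    rw [dft_mul_countSketch, dft_mul_countSketch, dft_mul_countSketch, dft_hashPair]
    simp only [Matrix.map_apply, Matrix.kroneckerMap_apply, Complex.ofReal_mul]
    ring
  rw [← key, Matrix.nonsing_inv_mul_cancel_left _ _ (dft_isUnit_det m)]
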